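/- Let H ∈ (0, 1/2). There exists a positive constant C, depending only on H and independent of T, such that for every T > 0, ∫∫∫∫_{0<s<t<u<v<T} min(1, s^(2H−2)) · min(1, (u−t)^(2H−2)) · min(1, (v−u)^(2H−2)) · min(1, (v−s)^(2H−2)) ds dt du dv ≤ C. -/

import Mathlib

open MeasureTheory Real Set

/-!
The four increments `s`, `u - t`, `v - u`, `v - s` are a unimodular linear change of the variables
`(s, t, u, v)`, and it maps the simplex into the open positive orthant. Hence the integral is at
most the integral of the product of the four kernels over the orthant, which is the product of the
one-dimensional integrals `∫₀^∞ min(1, x^a) dx`. These are finite, equal to `a / (a + 1)`, as soon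
as `a < -1`, and `2H - 2 < -1` for `H < 1/2`.
-/

lemma setIntegral_comp_le_of_subset_preimage {α β : Type*} [MeasurableSpace α]
    [MeasurableSpace β] {μ : Measure α} {ν : Measure β} {Φ : α → β}
    (hΦ : MeasurePreserving Φ μ ν) {s : Set α} {t : Set β} (ht : MeasurableSet t)
    (hst : s ⊆ Φ ⁻¹' t) {f : β → ℝ} (hf : IntegrableOn f t ν) (hf₀ : 0 ≤ᵐ[ν.restrict t] f) :
    ∫ x in s, f (Φ x) ∂μ ≤ ∫ y in t, f y ∂ν := by
  have hΦt : MeasurePreserving Φ (μ.restrict (Φ ⁻¹' t)) (ν.restrict t) := hΦ.restrict_preimage ht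
  calc ∫ x in s, f (Φ x) ∂μ
      ≤ ∫ x in Φ ⁻¹' t, f (Φ x) ∂μ :=
        setIntegral_mono_set (hΦt.integrable_comp_of_integrable hf)
          (hΦt.quasiMeasurePreserving.ae hf₀) hst.eventuallyLE
    _ = ∫ y in t, f y ∂ν := by
        rw [← hΦt.map_eq, integral_map hΦt.aemeasurable (hΦt.map_eq ▸ hf.aestronglyMeasurable)]

lemma measurePreserving_sub_fst_prod {G β : Type*} [AddGroup G] [MeasurableSpace G]
    [MeasurableSpace β] [MeasurableAdd₂ G] [MeasurableNeg G] (μ : Measure G) [SFinite μ]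
    [μ.IsAddLeftInvariant] [μ.IsNegInvariant] (ν : Measure β) [SFinite ν] {h : β → G}
    (hh : Measurable h) :
    MeasurePreserving (fun p : G × β ↦ (h p.2 - p.1, p.2)) (μ.prod ν) (μ.prod ν) := by
  have swapped : MeasurePreserving (fun p : β × G ↦ (p.1, h p.1 - p.2)) (ν.prod μ) (ν.prod μ) :=
    (MeasurePreserving.id ν).skew_product (by fun_prop)
      (.of_forall fun b ↦ (Measure.measurePreserving_sub_left μ (h b)).map_eq)
  exact Measure.measurePreserving_swap.comp (swapped.comp Measure.measurePreserving_swap)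

/-- The increments `(s, u - t, v - u, v - s)` of `(s, t, u, v)`, at which the four covariance
factors in the fourth cumulant are evaluated. -/
def cumulantIncrements {G : Type*} [Sub G] (p : G × G × G × G) : G × G × G × G :=
  (p.1, p.2.2.1 - p.2.1, p.2.2.2 - p.2.2.1, p.2.2.2 - p.1)

lemma measurePreserving_cumulantIncrements {G : Type*} [AddCommGroup G] [MeasurableSpace G]
    [MeasurableAdd₂ G] [MeasurableNeg G] (μ : Measure G) [SFinite μ] [μ.IsAddLeftInvariant]
    [μ.IsNegInvariant] :
    MeasurePreserving cumulantIncrements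
      (μ.prod (μ.prod (μ.prod μ))) (μ.prod (μ.prod (μ.prod μ))) := by
  have tu_increments : MeasurePreserving
      (fun q : G × G × G ↦ (q.2.1 - q.1, q.2.2 - q.2.1, q.2.2))
      (μ.prod (μ.prod μ)) (μ.prod (μ.prod μ)) :=
    ((MeasurePreserving.id μ).prod (measurePreserving_sub_fst_prod μ μ measurable_id)).comp
      (measurePreserving_sub_fst_prod μ (μ.prod μ) measurable_fst)
  have v_increment (s : G) : MeasurePreserving
      (fun q : G × G × G ↦ (q.1, q.2.1, q.2.2 - s)) (μ.prod (μ.prod μ)) (μ.prod (μ.prod μ)) :=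
    (MeasurePreserving.id μ).prod ((MeasurePreserving.id μ).prod (measurePreserving_sub_right μ s))
  exact (MeasurePreserving.id μ).skew_product
    (g := fun s (q : G × G × G) ↦ (q.2.1 - q.1, q.2.2 - q.2.1, q.2.2 - s)) (by fun_prop)
    (.of_forall fun s ↦ ((v_increment s).comp tu_increments).map_eq)

lemma setIntegral_simplex_le_mul_integral_Ioi {f₁ f₂ f₃ f₄ : ℝ → ℝ}
    (hf₁ : IntegrableOn f₁ (Ioi 0)) (hf₂ : IntegrableOn f₂ (Ioi 0))
    (hf₃ : IntegrableOn f₃ (Ioi 0)) (hf₄ : IntegrableOn f₄ (Ioi 0))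
    (nonneg₁ : ∀ x, 0 < x → 0 ≤ f₁ x) (nonneg₂ : ∀ x, 0 < x → 0 ≤ f₂ x)
    (nonneg₃ : ∀ x, 0 < x → 0 ≤ f₃ x) (nonneg₄ : ∀ x, 0 < x → 0 ≤ f₄ x) (T : ℝ) :
    ∫ p in {p : ℝ × ℝ × ℝ × ℝ |
        0 < p.1 ∧ p.1 < p.2.1 ∧ p.2.1 < p.2.2.1 ∧ p.2.2.1 < p.2.2.2 ∧ p.2.2.2 < T},
      f₁ p.1 * f₂ (p.2.2.1 - p.2.1) * f₃ (p.2.2.2 - p.2.2.1) * f₄ (p.2.2.2 - p.1) ≤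
    (∫ x in Ioi 0, f₁ x) * (∫ x in Ioi 0, f₂ x) * (∫ x in Ioi 0, f₃ x) * ∫ x in Ioi 0, f₄ x := by
  let orthant : Set (ℝ × ℝ × ℝ × ℝ) := Ioi 0 ×ˢ Ioi 0 ×ˢ Ioi 0 ×ˢ Ioi 0
  let F (q : ℝ × ℝ × ℝ × ℝ) : ℝ := f₁ q.1 * (f₂ q.2.1 * (f₃ q.2.2.1 * f₄ q.2.2.2))
  have orthant_meas : MeasurableSet orthant := by measurability
  have F_integrable : IntegrableOn F orthant := by
    simp only [IntegrableOn, orthant, Measure.volume_eq_prod, ← Measure.prod_restrict]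
    exact hf₁.mul_prod (hf₂.mul_prod (hf₃.mul_prod hf₄))
  have F_nonneg : 0 ≤ᵐ[volume.restrict orthant] F := by
    filter_upwards [ae_restrict_mem orthant_meas] with q ⟨h₁, h₂, h₃, h₄⟩
    exact mul_nonneg (nonneg₁ _ h₁)
      (mul_nonneg (nonneg₂ _ h₂) (mul_nonneg (nonneg₃ _ h₃) (nonneg₄ _ h₄)))
  have F_integral : ∫ q in orthant, F q =
      (∫ x in Ioi 0, f₁ x) *
        ((∫ x in Ioi 0, f₂ x) * ((∫ x in Ioi 0, f₃ x) * ∫ x in Ioi 0, f₄ x)) := by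
    rw [← setIntegral_prod_mul, ← setIntegral_prod_mul, ← setIntegral_prod_mul]
    rfl
  simp only [mul_assoc]
  rw [← F_integral]
  refine setIntegral_comp_le_of_subset_preimage (measurePreserving_cumulantIncrements volume)
    orthant_meas ?_ F_integrable F_nonneg
  rintro ⟨s, t, u, v⟩ ⟨hs, hst, htu, huv, -⟩
  exact ⟨hs, sub_pos.2 htu, sub_pos.2 huv, sub_pos.2 (hst.trans (htu.trans huv))⟩

section TruncatedPower

variable {a : ℝ}

lemma min_one_rpow_nonneg {x : ℝ} (hx : 0 ≤ x) : 0 ≤ min 1 (x ^ a) :=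
  le_min zero_le_one (rpow_nonneg hx a)

lemma eqOn_min_one_rpow_Ioc (ha : a ≤ 0) :
    EqOn (fun x : ℝ ↦ min 1 (x ^ a)) 1 (Ioc 0 1) :=
  fun _ hx ↦ min_eq_left (one_le_rpow_of_pos_of_le_one_of_nonpos hx.1 hx.2 ha)

lemma eqOn_min_one_rpow_Ioi (ha : a ≤ 0) :
    EqOn (fun x : ℝ ↦ min 1 (x ^ a)) (fun x ↦ x ^ a) (Ioi 1) :=
  fun _ hx ↦ min_eq_right (rpow_le_one_of_one_le_of_nonpos (le_of_lt hx) ha)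

lemma integrableOn_min_one_rpow_Ioc (ha : a ≤ 0) :
    IntegrableOn (fun x : ℝ ↦ min 1 (x ^ a)) (Ioc 0 1) :=
  (integrableOn_congr_fun (eqOn_min_one_rpow_Ioc ha) measurableSet_Ioc).2
    (integrableOn_const (by simp))

lemma integrableOn_min_one_rpow_Ioi_one (ha : a < -1) :
    IntegrableOn (fun x : ℝ ↦ min 1 (x ^ a)) (Ioi 1) :=
  (integrableOn_congr_fun (eqOn_min_one_rpow_Ioi (by linarith)) measurableSet_Ioi).2
    (integrableOn_Ioi_rpow_of_lt ha one_pos)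

lemma integrableOn_min_one_rpow_Ioi (ha : a < -1) :
    IntegrableOn (fun x : ℝ ↦ min 1 (x ^ a)) (Ioi 0) := by
  rw [← Ioc_union_Ioi_eq_Ioi zero_le_one]
  exact (integrableOn_min_one_rpow_Ioc (by linarith)).union (integrableOn_min_one_rpow_Ioi_one ha)

lemma integral_Ioi_min_one_rpow (ha : a < -1) :
    ∫ x in Ioi (0 : ℝ), min 1 (x ^ a) = a / (a + 1) := by
  have ha₀ : a ≤ 0 := by linarith
  have ha₁ : a + 1 ≠ 0 := by linarith
  calc ∫ x in Ioi (0 : ℝ), min 1 (x ^ a)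
      = (∫ x in Ioc (0 : ℝ) 1, min 1 (x ^ a)) + ∫ x in Ioi (1 : ℝ), min 1 (x ^ a) := by
        rw [← Ioc_union_Ioi_eq_Ioi zero_le_one, setIntegral_union (Ioc_disjoint_Ioi le_rfl)
          measurableSet_Ioi (integrableOn_min_one_rpow_Ioc ha₀)
          (integrableOn_min_one_rpow_Ioi_one ha)]
    _ = (∫ _ in Ioc (0 : ℝ) 1, 1) + ∫ x in Ioi (1 : ℝ), x ^ a := by
        rw [setIntegral_congr_fun measurableSet_Ioc (eqOn_min_one_rpow_Ioc ha₀),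
          setIntegral_congr_fun measurableSet_Ioi (eqOn_min_one_rpow_Ioi ha₀)]
        rfl
    _ = 1 + -1 / (a + 1) := by simp [integral_Ioi_rpow_of_lt ha one_pos]
    _ = a / (a + 1) := by field_simp; ring

end TruncatedPower

theorem fourth_cumulant_uniform_bound_general {a b c d : ℝ} (ha : a < -1) (hb : b < -1)
    (hc : c < -1) (hd : d < -1) (T : ℝ) :
    (∫ p in {p : ℝ × ℝ × ℝ × ℝ |
        0 < p.1 ∧ p.1 < p.2.1 ∧ p.2.1 < p.2.2.1 ∧ p.2.2.1 < p.2.2.2 ∧ p.2.2.2 < T},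
      min 1 (p.1 ^ a) * min 1 ((p.2.2.1 - p.2.1) ^ b) * min 1 ((p.2.2.2 - p.2.2.1) ^ c)
        * min 1 ((p.2.2.2 - p.1) ^ d)) ≤
      a / (a + 1) * (b / (b + 1)) * (c / (c + 1)) * (d / (d + 1)) := by
  rw [← integral_Ioi_min_one_rpow ha, ← integral_Ioi_min_one_rpow hb,
    ← integral_Ioi_min_one_rpow hc, ← integral_Ioi_min_one_rpow hd]
  exact setIntegral_simplex_le_mul_integral_Ioi
    (integrableOn_min_one_rpow_Ioi ha) (integrableOn_min_one_rpow_Ioi hb)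
    (integrableOn_min_one_rpow_Ioi hc) (integrableOn_min_one_rpow_Ioi hd)
    (fun _ hx ↦ min_one_rpow_nonneg hx.le) (fun _ hx ↦ min_one_rpow_nonneg hx.le)
    (fun _ hx ↦ min_one_rpow_nonneg hx.le) (fun _ hx ↦ min_one_rpow_nonneg hx.le) T

/-- For `H ∈ (0,1/2)` there is `C > 0` (depending only on `H`, independent of `T`) with
`∫∫∫∫_{0<s<t<u<v<T} min(1,s^{2H-2}) min(1,(u-t)^{2H-2}) min(1,(v-u)^{2H-2})
  min(1,(v-s)^{2H-2}) ds dt du dv ≤ C` for every `T > 0`. -/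
theorem fourth_cumulant_uniform_bound (H : ℝ) (hH : H ∈ Set.Ioo (0 : ℝ) (1/2)) :
    ∃ C : ℝ, 0 < C ∧ ∀ T : ℝ, 0 < T →
      (∫ p in {p : ℝ × ℝ × ℝ × ℝ |
          0 < p.1 ∧ p.1 < p.2.1 ∧ p.2.1 < p.2.2.1 ∧ p.2.2.1 < p.2.2.2 ∧ p.2.2.2 < T},
        min 1 (p.1 ^ (2 * H - 2)) * min 1 ((p.2.2.1 - p.2.1) ^ (2 * H - 2))
          * min 1 ((p.2.2.2 - p.2.2.1) ^ (2 * H - 2))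
          * min 1 ((p.2.2.2 - p.1) ^ (2 * H - 2))) ≤ C := by
  have ha : 2 * H - 2 < -1 := by linarith [hH.2]
  have hk : 0 < (2 * H - 2) / (2 * H - 2 + 1) :=
    div_pos_of_neg_of_neg (by linarith) (by linarith)
  exact ⟨_, by positivity, fun T _ ↦ fourth_cumulant_uniform_bound_general ha ha ha ha T⟩
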